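/- Let n ≥ 2. Let H̄ ⊂ ℝPⁿ be a projective subspace of codimension 1 (the projectivization of an n-dimensional linear subspace H ⊂ ℝ^{n+1}), and let p̄₁, ..., p̄_{n+1} ∈ H̄ be generic in H̄ (i.e., for any lifts in H, every n of the n+1 lifts are linearly independent). Let p̄_{n+2} ∈ ℝPⁿ \ H̄. Let F : ℝPⁿ → ℝPⁿ be an injective mapping that maps any projective line containing one of the points p̄₁, ..., p̄_{n+2} onto a projective line. Then F is a projective-linear mapping. -/

import Mathlib

open scoped LinearAlgebra.Projectivization

/-- A subset of `ℝPⁿ` (the projectivization of `ℝ^{n+1}`) is a projective line if it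
consists of all projective points lying in a fixed two-dimensional linear subspace. -/
def IsProjLine {n : ℕ} (l : Set (ℙ ℝ (Fin (n + 1) → ℝ))) : Prop :=
  ∃ W : Submodule ℝ (Fin (n + 1) → ℝ), Module.finrank ℝ W = 2 ∧
    l = {p | p.submodule ≤ W}

/-- A self-map of `ℝPⁿ` is projective-linear if it is induced by an invertible linear
transformation of `ℝ^{n+1}`. -/
def IsProjLinear {n : ℕ} (F : ℙ ℝ (Fin (n + 1) → ℝ) → ℙ ℝ (Fin (n + 1) → ℝ)) : Prop :=
  ∃ A : (Fin (n + 1) → ℝ) ≃ₗ[ℝ] (Fin (n + 1) → ℝ),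
    F = Projectivization.map (A : (Fin (n + 1) → ℝ) →ₗ[ℝ] (Fin (n + 1) → ℝ)) A.injective

section helpers
variable {V : Type*} [AddCommGroup V] [Module ℝ V]

theorem pt_le_iff (y : ℙ ℝ V) (S : Submodule ℝ V) : y.submodule ≤ S ↔ y.rep ∈ S := by
  rw [Projectivization.submodule_eq, Submodule.span_singleton_le_iff_mem]

theorem exists_pt (v : V) (hv : v ≠ 0) : ∃ z : ℙ ℝ V, z.submodule = Submodule.span ℝ {v} :=
  ⟨Projectivization.mk ℝ v hv, Projectivization.submodule_mk v hv⟩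

theorem pt_eq_of_le {y z : ℙ ℝ V} (h : y.submodule ≤ z.submodule) : y = z := by
  apply Projectivization.submodule_injective
  apply Submodule.eq_of_le_of_finrank_eq h
  rw [Projectivization.finrank_submodule, Projectivization.finrank_submodule]

theorem join_union (w x : ℙ ℝ V) (S : Submodule ℝ V) (hx : x.submodule ≤ S) :
    {y : ℙ ℝ V | y.submodule ≤ w.submodule ⊔ S} =
      ⋃ z ∈ {z : ℙ ℝ V | z.submodule ≤ S}, {y : ℙ ℝ V | y.submodule ≤ w.submodule ⊔ z.submodule} := by
  ext y
  simp only [Set.mem_ofPred_eq, Set.mem_iUnion, exists_prop]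
  constructor
  · intro h
    rw [pt_le_iff] at h
    obtain ⟨a, ha, b, hb, hab⟩ := Submodule.mem_sup.1 h
    by_cases hb0 : b = 0
    · refine ⟨x, hx, ?_⟩
      rw [pt_le_iff, ← hab, hb0, add_zero]
      exact Submodule.mem_sup_left ha
    · obtain ⟨z, hz⟩ := exists_pt b hb0
      refine ⟨z, ?_, ?_⟩
      · rw [hz, Submodule.span_singleton_le_iff_mem]; exact hb
      · rw [pt_le_iff, ← hab, hz]
        exact Submodule.add_mem_sup ha (Submodule.mem_span_singleton_self b)
  · rintro ⟨z, hz, h⟩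
    exact h.trans (sup_le_sup_left hz _)

theorem finrank_join {w x : ℙ ℝ V} (h : w ≠ x) :
    Module.finrank ℝ ↥(w.submodule ⊔ x.submodule) = 2 := by
  have h1 := Submodule.finrank_sup_add_finrank_inf_eq w.submodule x.submodule
  rw [Projectivization.finrank_submodule, Projectivization.finrank_submodule] at h1
  have h2 : w.submodule ⊓ x.submodule = ⊥ := by
    by_contra hne
    obtain ⟨v, hv, hv0⟩ := Submodule.exists_mem_ne_zero_of_ne_bot hne
    obtain ⟨z, hz⟩ := exists_pt v hv0
    have hz1 : z = w := pt_eq_of_le (by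
      rw [hz, Submodule.span_singleton_le_iff_mem]; exact hv.1)
    have hz2 : z = x := pt_eq_of_le (by
      rw [hz, Submodule.span_singleton_le_iff_mem]; exact hv.2)
    exact h (hz1.symm.trans hz2)
  rw [h2, finrank_bot] at h1
  omega

end helpers

theorem line_image {n : ℕ} (F : ℙ ℝ (Fin (n + 1) → ℝ) → ℙ ℝ (Fin (n + 1) → ℝ))
    (hinj : Function.Injective F) (w : ℙ ℝ (Fin (n + 1) → ℝ))
    (hw : ∀ l : Set (ℙ ℝ (Fin (n + 1) → ℝ)), IsProjLine l → w ∈ l → IsProjLine (F '' l))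
    (x : ℙ ℝ (Fin (n + 1) → ℝ)) :
    F '' {y | y.submodule ≤ w.submodule ⊔ x.submodule} =
      {z | z.submodule ≤ (F w).submodule ⊔ (F x).submodule} := by
  by_cases h : w = x
  · subst h
    ext z
    simp only [sup_idem, Set.mem_image, Set.mem_ofPred_eq]
    constructor
    · rintro ⟨y, hy, rfl⟩
      rw [pt_eq_of_le hy]
    · intro hz
      exact ⟨w, le_rfl, (pt_eq_of_le hz).symm⟩
  · obtain ⟨W, hW, hl⟩ := hw _ ⟨_, finrank_join h, rfl⟩
      (show w.submodule ≤ w.submodule ⊔ x.submodule from le_sup_left)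
    have h1 : (F w).submodule ≤ W := by
      have : F w ∈ {p : ℙ ℝ (Fin (n + 1) → ℝ) | p.submodule ≤ W} := by
        rw [← hl]; exact Set.mem_image_of_mem F (show w.submodule ≤ _ from le_sup_left)
      exact this
    have h2 : (F x).submodule ≤ W := by
      have : F x ∈ {p : ℙ ℝ (Fin (n + 1) → ℝ) | p.submodule ≤ W} := by
        rw [← hl]; exact Set.mem_image_of_mem F (show x.submodule ≤ _ from le_sup_right)
      exact this
    have h3 : (F w).submodule ⊔ (F x).submodule = W :=
      Submodule.eq_of_le_of_finrank_eq (sup_le h1 h2)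
        (by rw [hW]; exact finrank_join (fun e => h (hinj e)))
    rw [hl, h3]

theorem flat_image {n : ℕ} (F : ℙ ℝ (Fin (n + 1) → ℝ) → ℙ ℝ (Fin (n + 1) → ℝ))
    (hinj : Function.Injective F) (p : Fin (n + 1) → ℙ ℝ (Fin (n + 1) → ℝ))
    (hw : ∀ i, ∀ l : Set (ℙ ℝ (Fin (n + 1) → ℝ)), IsProjLine l → p i ∈ l → IsProjLine (F '' l))
    (x : ℙ ℝ (Fin (n + 1) → ℝ)) (s : Finset (Fin (n + 1))) :
    F '' {y | y.submodule ≤ (⨆ j ∈ s, (p j).submodule) ⊔ x.submodule} =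
      {z | z.submodule ≤ (⨆ j ∈ s, (F (p j)).submodule) ⊔ (F x).submodule} := by
  classical
  induction s using Finset.induction_on with
  | empty =>
    ext z
    simp only [Finset.notMem_empty, iSup_false, iSup_bot, bot_sup_eq, Set.mem_image,
      Set.mem_ofPred_eq]
    constructor
    · rintro ⟨y, hy, rfl⟩
      rw [pt_eq_of_le hy]
    · intro hz
      exact ⟨x, le_rfl, (pt_eq_of_le hz).symm⟩
  | insert i s _ ih =>
    rw [Finset.iSup_insert, Finset.iSup_insert, sup_assoc, sup_assoc,
      join_union _ x _ le_sup_right, join_union _ (F x) _ le_sup_right, ← ih,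
      Set.biUnion_image, Set.image_iUnion₂]
    refine Set.iUnion₂_congr fun z _ => ?_
    exact line_image F hinj (p i) (hw i) z

theorem flat_iff {n : ℕ} (F : ℙ ℝ (Fin (n + 1) → ℝ) → ℙ ℝ (Fin (n + 1) → ℝ))
    (hinj : Function.Injective F) (p : Fin (n + 1) → ℙ ℝ (Fin (n + 1) → ℝ))
    (hw : ∀ i, ∀ l : Set (ℙ ℝ (Fin (n + 1) → ℝ)), IsProjLine l → p i ∈ l → IsProjLine (F '' l))
    (x y : ℙ ℝ (Fin (n + 1) → ℝ)) (s : Finset (Fin (n + 1))) :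
    (F y).submodule ≤ (⨆ j ∈ s, (F (p j)).submodule) ⊔ (F x).submodule ↔
      y.submodule ≤ (⨆ j ∈ s, (p j).submodule) ⊔ x.submodule := by
  have h := flat_image F hinj p hw x s
  have h2 : F y ∈ {z : ℙ ℝ (Fin (n + 1) → ℝ) | z.submodule ≤ (⨆ j ∈ s, (F (p j)).submodule) ⊔ (F x).submodule} ↔ y ∈ {y : ℙ ℝ (Fin (n + 1) → ℝ) | y.submodule ≤ (⨆ j ∈ s, (p j).submodule) ⊔ x.submodule} := by
    rw [← h, hinj.mem_set_image]
  exact h2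

theorem flat_iff' {n : ℕ} (F : ℙ ℝ (Fin (n + 1) → ℝ) → ℙ ℝ (Fin (n + 1) → ℝ))
    (hinj : Function.Injective F) (p : Fin (n + 1) → ℙ ℝ (Fin (n + 1) → ℝ))
    (hw : ∀ i, ∀ l : Set (ℙ ℝ (Fin (n + 1) → ℝ)), IsProjLine l → p i ∈ l → IsProjLine (F '' l))
    (y : ℙ ℝ (Fin (n + 1) → ℝ)) (s : Finset (Fin (n + 1))) (hs : s.Nonempty) :
    (F y).submodule ≤ (⨆ j ∈ s, (F (p j)).submodule) ↔
      y.submodule ≤ (⨆ j ∈ s, (p j).submodule) := by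
  obtain ⟨i, hi⟩ := hs
  have h := flat_iff F hinj p hw (p i) y s
  rwa [sup_eq_left.2 (le_iSup₂_of_le i hi le_rfl), sup_eq_left.2 (le_iSup₂_of_le i hi le_rfl)] at h

/-- nondegenerate configuration -/
structure GoodConf {n : ℕ} (p : Fin (n + 1) → ℙ ℝ (Fin (n + 1) → ℝ))
    (r : ℙ ℝ (Fin (n + 1) → ℝ)) : Prop where
  g1 : ∀ (s : Finset (Fin (n + 1))) (k : Fin (n + 1)), s.card + 1 = n → k ∉ s →
    ¬ (p k).submodule ≤ ⨆ j ∈ s, (p j).submodule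
  g2 : (p (Fin.last n)).submodule ≤ ⨆ j ∈ Finset.univ.erase (Fin.last n), (p j).submodule
  g3 : ¬ r.submodule ≤ ⨆ j ∈ Finset.univ.erase (Fin.last n), (p j).submodule

theorem GoodConf.image {n : ℕ} (hn : 2 ≤ n)
    {p : Fin (n + 1) → ℙ ℝ (Fin (n + 1) → ℝ)}
    {r : ℙ ℝ (Fin (n + 1) → ℝ)} (h : GoodConf p r)
    (F : ℙ ℝ (Fin (n + 1) → ℝ) → ℙ ℝ (Fin (n + 1) → ℝ))
    (hinj : Function.Injective F)
    (hw : ∀ i, ∀ l : Set (ℙ ℝ (Fin (n + 1) → ℝ)), IsProjLine l → p i ∈ l → IsProjLine (F '' l)) :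
    GoodConf (fun i => F (p i)) (F r) := by
  have hne : (Finset.univ.erase (Fin.last n)).Nonempty := by
    rw [← Finset.card_pos, Finset.card_erase_of_mem (Finset.mem_univ _)]
    simp; omega
  refine ⟨fun s k hs hk => ?_, ?_, ?_⟩
  · rw [flat_iff' F hinj p hw _ _ (by rw [← Finset.card_pos]; omega)]
    exact h.g1 s k hs hk
  · rw [flat_iff' F hinj p hw _ _ hne]
    exact h.g2
  · rw [flat_iff' F hinj p hw _ _ hne]
    exact h.g3

theorem iSup_pt {n : ℕ} (p : Fin (n + 1) → ℙ ℝ (Fin (n + 1) → ℝ)) (s : Finset (Fin (n+1))) :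
    (⨆ j ∈ s, (p j).submodule) = Submodule.span ℝ ((fun j => (p j).rep) '' (s : Set (Fin (n+1)))) := by
  rw [Set.image_eq_iUnion, Submodule.span_iUnion₂]
  simp only [Projectivization.submodule_eq, Finset.mem_coe]

theorem good_of_hyp {n : ℕ} 
    (H : Submodule ℝ (Fin (n + 1) → ℝ)) (hH : Module.finrank ℝ H = n)
    (p : Fin (n + 1) → ℙ ℝ (Fin (n + 1) → ℝ))
    (hpH : ∀ i, (p i).submodule ≤ H)
    (hp : ∀ s : Finset (Fin (n + 1)), s.card = n →
      LinearIndependent ℝ (fun i : s => (p i.1).rep))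
    (r : ℙ ℝ (Fin (n + 1) → ℝ))
    (hr : ¬ r.submodule ≤ H) : GoodConf p r := by
  classical
  have key : (⨆ j ∈ Finset.univ.erase (Fin.last n), (p j).submodule) = H := by
    apply Submodule.eq_of_le_of_finrank_eq
    · exact iSup₂_le fun i _ => hpH i
    · rw [hH, iSup_pt]
      have h1 := hp (Finset.univ.erase (Fin.last n)) (by simp)
      have h2 := finrank_span_eq_card h1
      rw [Set.image_eq_range]
      simpa using h2
  refine ⟨fun s k hs hk hle => ?_, key ▸ hpH _, key ▸ hr⟩
  have h1 := hp (insert k s) (by rw [Finset.card_insert_of_notMem hk, hs])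
  rw [iSup_pt, pt_le_iff] at hle
  have h2 : LinearIndepOn ℝ (fun j => (p j).rep) ((insert k s : Finset (Fin (n+1))) : Set (Fin (n+1))) := h1
  rw [Finset.coe_insert, linearIndepOn_insert (by simpa using hk)] at h2
  exact h2.2 hle

theorem good_frame {n : ℕ} 
    (p : Fin (n + 1) → ℙ ℝ (Fin (n + 1) → ℝ))
    (r : ℙ ℝ (Fin (n + 1) → ℝ)) (h : GoodConf p r) :
    ∃ A : ((Fin n → ℝ) × ℝ) ≃ₗ[ℝ] (Fin (n + 1) → ℝ),
      (∀ i : Fin n, (p i.castSucc).submodule = Submodule.span ℝ {A (Pi.single i 1, 0)}) ∧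
      (p (Fin.last n)).submodule = Submodule.span ℝ {A (fun _ => 1, 0)} ∧
      r.submodule = Submodule.span ℝ {A (0, 1)} := by
  classical
  have hE : (⨆ j ∈ Finset.univ.erase (Fin.last n), (p j).submodule) =
      Submodule.span ℝ (Set.range fun i : Fin n => (p i.castSucc).rep) := by
    rw [iSup_pt]
    congr 1
    ext v
    simp only [Set.mem_image, Set.mem_range, Finset.coe_erase, Finset.coe_univ]
    constructor
    · rintro ⟨j, hj, rfl⟩
      have hj' : j ≠ Fin.last n := by simpa using hj
      obtain ⟨i, rfl⟩ := Fin.exists_castSucc_eq.2 hj'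
      exact ⟨i, rfl⟩
    · rintro ⟨i, rfl⟩
      exact ⟨i.castSucc, by simp [Fin.castSucc_ne_last], rfl⟩
  obtain ⟨a, ha⟩ := (Submodule.mem_span_range_iff_exists_fun ℝ).1
    ((pt_le_iff _ _).1 (hE ▸ h.g2))
  -- independence
  have hsub : ∀ (i : Fin n) (k : Fin (n+1)), (∀ j : Fin n, j ≠ i → k ≠ j.castSucc) → ∀ c : Fin n → ℝ, c i = 0 →
      (p k).rep ≠ ∑ j, c j • (p j.castSucc).rep := by
    intro i k hk c hc heq
    have hcard : ((Finset.univ.erase i).map Fin.castSuccEmb).card + 1 = n := by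
      rw [Finset.card_map, Finset.card_erase_of_mem (Finset.mem_univ _)]
      have := i.pos
      simp; omega
    refine h.g1 ((Finset.univ.erase i).map Fin.castSuccEmb) k hcard ?_ ?_
    · simp only [Finset.mem_map, Finset.mem_erase, Finset.mem_univ, and_true, not_exists, not_and]
      intro j hj e
      exact hk j hj e.symm
    · rw [pt_le_iff, iSup_pt, heq]
      refine Submodule.sum_mem _ fun j _ => ?_
      by_cases hj : j = i
      · rw [hj, hc, zero_smul]; exact Submodule.zero_mem _
      · refine Submodule.smul_mem _ _ (Submodule.subset_span ⟨j.castSucc, ?_, rfl⟩)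
        simp [hj]
  have hind : LinearIndependent ℝ (fun i : Fin n => (p i.castSucc).rep) := by
    rw [Fintype.linearIndependent_iff]
    intro g hg i
    by_contra hgi
    refine hsub i i.castSucc (fun j hj e => hj (Fin.castSucc_injective _ e).symm)
      (fun j => if j = i then 0 else - (g i)⁻¹ * g j) (by simp) ?_
    rw [← Finset.add_sum_erase _ _ (Finset.mem_univ i)] at hg ⊢
    have h1 : ∑ x ∈ Finset.univ.erase i, (if x = i then 0 else - (g i)⁻¹ * g x) • (p x.castSucc).rep
        = - (g i)⁻¹ • ∑ x ∈ Finset.univ.erase i, g x • (p x.castSucc).rep := by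
      rw [Finset.smul_sum]
      refine Finset.sum_congr rfl fun x hx => ?_
      rw [if_neg (Finset.ne_of_mem_erase hx), smul_smul]
    rw [h1, eq_neg_of_add_eq_zero_right hg]
    simp [smul_smul, hgi]
  have ha0 : ∀ i, a i ≠ 0 := fun i hi =>
    hsub i (Fin.last n) (fun j _ => (Fin.castSucc_ne_last j).symm) a hi ha.symm
  let L : ((Fin n → ℝ) × ℝ) →ₗ[ℝ] (Fin (n + 1) → ℝ) :=
    (Fintype.linearCombination ℝ (fun i : Fin n => a i • (p i.castSucc).rep)).coprod
      (LinearMap.toSpanSingleton ℝ _ r.rep)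
  have hL : ∀ x t, L (x, t) = ∑ i, x i • a i • (p i.castSucc).rep + t • r.rep := by
    intro x t
    simp [L, Fintype.linearCombination_apply]
  have hLinj : Function.Injective L := by
    rw [← LinearMap.ker_eq_bot, LinearMap.ker_eq_bot']
    rintro ⟨x, t⟩ hxt
    rw [hL] at hxt
    have ht : t = 0 := by
      by_contra ht
      apply h.g3
      rw [hE, pt_le_iff]
      have : r.rep = (-t⁻¹) • ∑ i, x i • a i • (p i.castSucc).rep := by
        rw [eq_neg_of_add_eq_zero_left hxt]
        simp [smul_smul, ht]
      rw [this]
      refine Submodule.smul_mem _ _ (Submodule.sum_mem _ fun i _ => Submodule.smul_mem _ _ (Submodule.smul_mem _ _ (Submodule.subset_span ⟨i, rfl⟩)))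
    subst ht
    rw [zero_smul, add_zero] at hxt
    simp only [smul_smul] at hxt
    have := Fintype.linearIndependent_iff.1 hind _ hxt
    ext i
    · simpa [ha0 i] using this i
    · rfl
  let A := LinearEquiv.ofInjectiveOfFinrankEq L hLinj (by simp)
  have hA : ∀ z, A z = L z := fun z => rfl
  refine ⟨A, fun i => ?_, ?_, ?_⟩
  · rw [hA, hL]
    simp only [Pi.single_apply, ite_smul, one_smul, zero_smul, Finset.sum_ite_eq', Finset.sum_ite_eq, Finset.mem_univ, if_true, add_zero]
    rw [Submodule.span_singleton_smul_eq (ha0 i).isUnit, Projectivization.submodule_eq]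
  · rw [hA, hL]
    simp only [one_smul, zero_smul, add_zero]
    rw [ha, Projectivization.submodule_eq]
  · rw [hA, hL]
    simp [Projectivization.submodule_eq]

theorem frame_flat {n : ℕ} (p : Fin (n + 1) → ℙ ℝ (Fin (n + 1) → ℝ))
    (A : ((Fin n → ℝ) × ℝ) ≃ₗ[ℝ] (Fin (n + 1) → ℝ))
    (hA : ∀ i : Fin n, (p i.castSucc).submodule = Submodule.span ℝ {A (Pi.single i 1, 0)})
    (J : Finset (Fin n)) (x : Fin n → ℝ) (t : ℝ) :
    A (x, t) ∈ (⨆ j ∈ J.map Fin.castSuccEmb, (p j).submodule) ↔ t = 0 ∧ ∀ i ∉ J, x i = 0 := by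
  classical
  constructor
  · intro h
    let S : Submodule ℝ ((Fin n → ℝ) × ℝ) :=
      { carrier := {z | z.2 = 0 ∧ ∀ i ∉ J, z.1 i = 0}
        add_mem' := by
          rintro a b ⟨h1, h2⟩ ⟨h3, h4⟩
          exact ⟨by simp [h1, h3], fun i hi => by simp [h2 i hi, h4 i hi]⟩
        zero_mem' := ⟨rfl, fun _ _ => rfl⟩
        smul_mem' := by
          rintro c a ⟨h1, h2⟩
          exact ⟨by simp [h1], fun i hi => by simp [h2 i hi]⟩ }
    have hle : (⨆ j ∈ J.map Fin.castSuccEmb, (p j).submodule) ≤ S.comap A.symm.toLinearMap := by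
      refine iSup₂_le fun j hj => ?_
      obtain ⟨i, hi, rfl⟩ := Finset.mem_map.1 hj
      rw [Fin.castSuccEmb_apply, hA, Submodule.span_singleton_le_iff_mem, Submodule.mem_comap]
      simp only [LinearEquiv.coe_coe, LinearEquiv.symm_apply_apply]
      refine ⟨rfl, fun k hk => ?_⟩
      have hki : k ≠ i := fun e => hk (e ▸ hi)
      simp [hki]
    have h2 := hle h
    rw [Submodule.mem_comap] at h2
    simp only [LinearEquiv.coe_coe, LinearEquiv.symm_apply_apply] at h2
    exact h2
  · rintro ⟨rfl, hx⟩
    have : ((x, 0) : (Fin n → ℝ) × ℝ) = ∑ i, x i • ((Pi.single i 1, 0) : (Fin n → ℝ) × ℝ) := by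
      ext k
      · simp [Prod.fst_sum, Finset.sum_apply, Pi.single_apply]
      · simp [Prod.snd_sum]
    rw [this, map_sum]
    refine Submodule.sum_mem _ fun i _ => ?_
    by_cases hi : i ∈ J
    · rw [map_smul]
      refine Submodule.smul_mem _ _ ?_
      refine Submodule.mem_iSup_of_mem i.castSucc (Submodule.mem_iSup_of_mem ?_ ?_)
      · simpa using hi
      · rw [hA]; exact Submodule.mem_span_singleton_self _
    · rw [hx i hi, zero_smul, map_zero]; exact Submodule.zero_mem _

theorem frame_flat_sup {n : ℕ} (p : Fin (n + 1) → ℙ ℝ (Fin (n + 1) → ℝ))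
    (A : ((Fin n → ℝ) × ℝ) ≃ₗ[ℝ] (Fin (n + 1) → ℝ))
    (hA : ∀ i : Fin n, (p i.castSucc).submodule = Submodule.span ℝ {A (Pi.single i 1, 0)})
    (J : Finset (Fin n)) (x y : Fin n → ℝ) :
    A (x, 1) ∈ (⨆ j ∈ J.map Fin.castSuccEmb, (p j).submodule) ⊔ Submodule.span ℝ {A (y, 1)} ↔
      ∀ i ∉ J, x i = y i := by
  constructor
  · intro h i hi
    obtain ⟨u, hu, v, hv, huv⟩ := Submodule.mem_sup.1 h
    obtain ⟨c, rfl⟩ := Submodule.mem_span_singleton.1 hv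
    have hu' : u = A (x - c • y, 1 - c) := by
      rw [eq_sub_of_add_eq huv, ← map_smul, ← map_sub]
      simp
    rw [hu', frame_flat p A hA] at hu
    have h1 : c = 1 := by linarith [hu.1]
    have h2 := hu.2 i hi
    simp [h1] at h2
    linarith
  · intro h
    have : A (x, 1) = A (x - y, 0) + A (y, 1) := by rw [← map_add]; simp
    rw [this]
    refine Submodule.add_mem_sup ?_ (Submodule.mem_span_singleton_self _)
    rw [frame_flat p A hA]
    exact ⟨rfl, fun i hi => by simp [h i hi]⟩

theorem mem_join {n : ℕ} (A : ((Fin n → ℝ) × ℝ) ≃ₗ[ℝ] (Fin (n + 1) → ℝ))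
    (u v w : (Fin n → ℝ) × ℝ) :
    A u ∈ Submodule.span ℝ {A v} ⊔ Submodule.span ℝ {A w} ↔ ∃ a b : ℝ, u = a • v + b • w := by
  rw [← Submodule.span_union, Set.singleton_union, Submodule.mem_span_pair]
  simp only [← map_smul, ← map_add, A.injective.eq_iff, eq_comm]

/-- The real-analytic heart: coordinates of the affine part. -/
theorem phi_eq {n : ℕ} (hn : 2 ≤ n) (φ : (Fin n → ℝ) → (Fin n → ℝ))
    (h0 : φ 0 = 0) (h1 : φ (fun _ => 1) ≠ 0)
    (ha : ∀ x y : Fin n → ℝ, ∀ i, x i = y i → φ x i = φ y i)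
    (hb : ∀ (x : Fin n → ℝ) (t : ℝ), ∃ s : ℝ, φ (fun i => x i + t) = fun i => φ x i + s)
    (hc : ∀ (x : Fin n → ℝ) (t : ℝ), ∃ s : ℝ, φ (t • x) = s • φ x) :
    ∃ c : ℝ, c ≠ 0 ∧ ∀ x, φ x = c • x := by
  let i0 : Fin n := ⟨0, by omega⟩
  let i1 : Fin n := ⟨1, by omega⟩
  have h01 : i0 ≠ i1 := by simp [i0, i1, Fin.ext_iff]
  let f : ℝ → ℝ := fun t => φ (fun _ => t) i0
  have hf : ∀ x i, φ x i = f (x i) := by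
    intro x i
    obtain ⟨s, hs⟩ := hb 0 (x i)
    rw [h0] at hs
    have e : (fun j : Fin n => (0 : Fin n → ℝ) j + x i) = fun _ => x i := by ext; simp
    rw [e] at hs
    rw [ha x (fun _ => x i) i rfl]
    show _ = φ (fun _ => x i) i0
    rw [hs]; rfl
  have f0 : f 0 = 0 := by
    have := hf 0 i0
    rw [h0] at this
    exact this.symm
  have fadd : ∀ a t, f (a + t) = f a + f t := by
    intro a t
    let x : Fin n → ℝ := fun i => if i = i0 then a else 0
    obtain ⟨s, hs⟩ := hb x t
    have e0 := congrFun hs i0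
    have e1 := congrFun hs i1
    simp only [hf, x, if_true, if_neg h01.symm, f0, zero_add] at e0 e1
    rw [e0, e1]
  have f1 : f 1 ≠ 0 := by
    intro h
    apply h1
    ext i
    rw [hf, h]; rfl
  have fmul : ∀ s t, f 1 * f (s * t) = f s * f t := by
    intro s t
    let x : Fin n → ℝ := fun i => if i = i0 then 1 else t
    obtain ⟨a, hs⟩ := hc x s
    have e0 := congrFun hs i0
    have e1 := congrFun hs i1
    simp only [hf, x, Pi.smul_apply, smul_eq_mul, if_true, if_neg h01.symm, mul_one] at e0 e1
    rw [e0, e1]; ring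
  let g : ℝ →+* ℝ :=
    { toFun := fun t => f t / f 1
      map_one' := div_self f1
      map_zero' := by simp [f0]
      map_add' := fun a b => by rw [fadd, add_div]
      map_mul' := fun a b => by
        have := fmul a b
        field_simp
        linarith }
  have hg : ∀ t, f t = f 1 * t := by
    intro t
    have h2 : g = RingHom.id ℝ := Subsingleton.elim _ _
    have h3 : g t = t := by rw [h2]; rfl
    have h4 : f t / f 1 = t := h3
    field_simp at h4
    linarith
  exact ⟨f 1, f1, fun x => by ext i; rw [hf, hg]; rfl⟩

/-- **Theorem (fundamental theorem of projective geometry, n+1 points on a hyperplane).**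
Let `n ≥ 2`, let `H̄` be a projective subspace of codimension `1` (the projectivization
of an `n`-dimensional linear subspace `H ⊂ ℝ^{n+1}`), let `p̄₁,…,p̄_{n+1} ∈ H̄` be
generic in `H̄` (every `n` of their lifts are linearly independent), and let
`p̄_{n+2} = r ∈ ℝPⁿ \ H̄`. If `F : ℝPⁿ → ℝPⁿ` is injective and maps every projective
line through one of `p̄₁,…,p̄_{n+2}` onto a projective line, then `F` is
projective-linear. -/
theorem projective_linear_of_hyperplane_points
    {n : ℕ} (hn : 2 ≤ n)
    (H : Submodule ℝ (Fin (n + 1) → ℝ)) (hH : Module.finrank ℝ H = n)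
    (p : Fin (n + 1) → ℙ ℝ (Fin (n + 1) → ℝ))
    (hpH : ∀ i, (p i).submodule ≤ H)
    (hp : ∀ s : Finset (Fin (n + 1)), s.card = n →
      LinearIndependent ℝ (fun i : s => (p i.1).rep))
    (r : ℙ ℝ (Fin (n + 1) → ℝ))
    (hr : ¬ r.submodule ≤ H)
    (F : ℙ ℝ (Fin (n + 1) → ℝ) → ℙ ℝ (Fin (n + 1) → ℝ))
    (hinj : Function.Injective F)
    (hline : ∀ l : Set (ℙ ℝ (Fin (n + 1) → ℝ)), IsProjLine l →
      ((∃ i, p i ∈ l) ∨ r ∈ l) → IsProjLine (F '' l)) :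
    IsProjLinear F := by
  classical
  have hgood := good_of_hyp H hH p hpH hp r hr
  have hw : ∀ i, ∀ l : Set (ℙ ℝ (Fin (n + 1) → ℝ)), IsProjLine l → p i ∈ l → IsProjLine (F '' l) :=
    fun i l hl hi => hline l hl (Or.inl ⟨i, hi⟩)
  have hwr : ∀ l : Set (ℙ ℝ (Fin (n + 1) → ℝ)), IsProjLine l → r ∈ l → IsProjLine (F '' l) :=
    fun l hl hi => hline l hl (Or.inr hi)
  have hgood' := hgood.image hn F hinj hw
  obtain ⟨A, hA1, hA2, hA3⟩ := good_frame p r hgood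
  obtain ⟨C, hC1, hC2, hC3⟩ := good_frame _ _ hgood'
  have hne : (Finset.univ.map (Fin.castSuccEmb (n := n))).Nonempty := by
    rw [← Finset.card_pos, Finset.card_map]
    simp; omega
  -- line transfer
  have hlr : ∀ x y : ℙ ℝ (Fin (n + 1) → ℝ), y.submodule ≤ r.submodule ⊔ x.submodule →
      (F y).submodule ≤ (F r).submodule ⊔ (F x).submodule := by
    intro x y hy
    have h1 := line_image F hinj r hwr x
    have h2 : F y ∈ {z : ℙ ℝ (Fin (n + 1) → ℝ) |
        z.submodule ≤ (F r).submodule ⊔ (F x).submodule} := by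
      rw [← h1]; exact Set.mem_image_of_mem F hy
    exact h2
  have hlp : ∀ i, ∀ x y : ℙ ℝ (Fin (n + 1) → ℝ), y.submodule ≤ (p i).submodule ⊔ x.submodule →
      (F y).submodule ≤ (F (p i)).submodule ⊔ (F x).submodule := by
    intro i x y hy
    have h1 := line_image F hinj (p i) (hw i) x
    have h2 : F y ∈ {z : ℙ ℝ (Fin (n + 1) → ℝ) |
        z.submodule ≤ (F (p i)).submodule ⊔ (F x).submodule} := by
      rw [← h1]; exact Set.mem_image_of_mem F hy
    exact h2
  -- affine points
  have hpt : ∀ x : Fin n → ℝ, ∃ y : ℙ ℝ (Fin (n + 1) → ℝ), y.submodule = Submodule.span ℝ {A (x, 1)} := by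
    intro x
    refine exists_pt _ fun h => ?_
    have := (LinearEquiv.map_eq_zero_iff A).1 h
    simp at this
  choose pt hpt using hpt
  have hφ : ∀ x : Fin n → ℝ, ∃ y : Fin n → ℝ, (F (pt x)).submodule = Submodule.span ℝ {C (y, 1)} := by
    intro x
    obtain ⟨⟨z, t⟩, hz⟩ := C.surjective (F (pt x)).rep
    have ht : t ≠ 0 := by
      rintro rfl
      have h1 : (F (pt x)).submodule ≤
          ⨆ j ∈ Finset.univ.map (Fin.castSuccEmb (n := n)), (F (p j)).submodule := by
        rw [pt_le_iff, ← hz]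
        exact (frame_flat (fun i => F (p i)) C hC1 Finset.univ z 0).2 (by simp)
      rw [flat_iff' F hinj p hw _ _ hne, hpt, Submodule.span_singleton_le_iff_mem,
        frame_flat p A hA1] at h1
      exact one_ne_zero h1.1
    refine ⟨t⁻¹ • z, ?_⟩
    have h2 : C (t⁻¹ • z, 1) = t⁻¹ • (F (pt x)).rep := by
      rw [← hz, ← map_smul]; simp [ht]
    rw [h2, Submodule.span_singleton_smul_eq (inv_ne_zero ht).isUnit, Projectivization.submodule_eq]
  choose φ hφ using hφ
  have pt0 : pt 0 = r := Projectivization.submodule_injective (by rw [hpt, hA3])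
  have h0 : φ 0 = 0 := by
    have h1 := hφ 0
    rw [pt0, hC3] at h1
    have h2 : C (φ 0, 1) ∈ Submodule.span ℝ {C (0, 1)} := by
      rw [h1]; exact Submodule.mem_span_singleton_self _
    obtain ⟨c, hc⟩ := Submodule.mem_span_singleton.1 h2
    rw [← map_smul, C.injective.eq_iff] at hc
    have := congrArg Prod.fst hc
    simpa using this.symm
  have h1 : φ (fun _ => 1) ≠ 0 := by
    intro h
    have e : F (pt fun _ => 1) = F (pt 0) :=
      Projectivization.submodule_injective (by rw [hφ, hφ, h, h0])
    have e2 := congrArg Projectivization.submodule (hinj e)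
    rw [hpt, hpt] at e2
    have h2 : A (fun _ => 1, 1) ∈ Submodule.span ℝ {A (0, 1)} := by
      rw [← e2]; exact Submodule.mem_span_singleton_self _
    obtain ⟨c, hc⟩ := Submodule.mem_span_singleton.1 h2
    rw [← map_smul, A.injective.eq_iff] at hc
    have := congrFun (congrArg Prod.fst hc) ⟨0, by omega⟩
    simp at this
  have ha : ∀ x y : Fin n → ℝ, ∀ i, x i = y i → φ x i = φ y i := by
    intro x y i hxy
    have h2 : (F (pt x)).submodule ≤ (⨆ j ∈ (Finset.univ.erase i).map Fin.castSuccEmb,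
        (F (p j)).submodule) ⊔ (F (pt y)).submodule := by
      rw [flat_iff F hinj p hw, hpt, hpt, Submodule.span_singleton_le_iff_mem,
        frame_flat_sup p A hA1]
      intro k hk
      have : k = i := by simpa using hk
      rw [this, hxy]
    rw [hφ, hφ, Submodule.span_singleton_le_iff_mem] at h2
    exact (frame_flat_sup (fun i => F (p i)) C hC1 _ _ _).1 h2 i (by simp)
  have hb : ∀ (x : Fin n → ℝ) (t : ℝ), ∃ s : ℝ, φ (fun i => x i + t) = fun i => φ x i + s := by
    intro x t
    have h2 := hlp (Fin.last n) (pt x) (pt fun i => x i + t) (by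
      rw [hpt, hpt, hA2, Submodule.span_singleton_le_iff_mem, mem_join]
      refine ⟨t, 1, ?_⟩
      ext i
      · simp [add_comm]
      · simp)
    rw [hφ, hφ, hC2, Submodule.span_singleton_le_iff_mem, mem_join] at h2
    obtain ⟨a, b, hab⟩ := h2
    have e2 := congrArg Prod.snd hab
    have e1 := congrArg Prod.fst hab
    simp at e2
    subst e2
    refine ⟨a, ?_⟩
    simp only at e1
    rw [e1]
    ext i
    simp [add_comm]
  have hc : ∀ (x : Fin n → ℝ) (t : ℝ), ∃ s : ℝ, φ (t • x) = s • φ x := by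
    intro x t
    have h2 := hlr (pt x) (pt (t • x)) (by
      rw [hpt, hpt, hA3, Submodule.span_singleton_le_iff_mem, mem_join]
      refine ⟨1 - t, t, ?_⟩
      ext i
      · simp
      · simp)
    rw [hφ, hφ, hC3, Submodule.span_singleton_le_iff_mem, mem_join] at h2
    obtain ⟨a, b, hab⟩ := h2
    refine ⟨b, ?_⟩
    have e1 := congrArg Prod.fst hab
    simpa using e1
  obtain ⟨c, hc0, hφc⟩ := phi_eq hn φ h0 h1 ha hb hc
  let D : ((Fin n → ℝ) × ℝ) ≃ₗ[ℝ] ((Fin n → ℝ) × ℝ) :=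
    (LinearEquiv.smulOfNeZero ℝ (Fin n → ℝ) c hc0).prodCongr (LinearEquiv.refl ℝ ℝ)
  have hD : ∀ x t, D (x, t) = (c • x, t) := fun x t => rfl
  refine ⟨A.symm.trans (D.trans C), ?_⟩
  funext y
  induction y using Projectivization.ind with
  | h v hv =>
  apply Projectivization.submodule_injective
  rw [Projectivization.map_mk, Projectivization.submodule_mk]
  obtain ⟨⟨x, t⟩, rfl⟩ := A.surjective v
  simp only [LinearEquiv.coe_coe, LinearEquiv.trans_apply, LinearEquiv.symm_apply_apply, hD]
  by_cases ht : t = 0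
  · subst ht
    set y := Projectivization.mk ℝ (A (x, 0)) hv with hy
    have hys : y.submodule = Submodule.span ℝ {A (x, 0)} := Projectivization.submodule_mk _ _
    have h2 := hlr (pt x) y (by
      rw [hpt, hys, hA3, Submodule.span_singleton_le_iff_mem, mem_join]
      refine ⟨-1, 1, ?_⟩
      ext i
      · simp
      · simp)
    obtain ⟨⟨z, t⟩, hz⟩ := C.surjective (F y).rep
    rw [hφ, hφc, hC3, pt_le_iff, ← hz, mem_join] at h2
    obtain ⟨a, b, hab⟩ := h2
    have h3 : (F y).submodule ≤
          ⨆ j ∈ Finset.univ.map (Fin.castSuccEmb (n := n)), (F (p j)).submodule := by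
      rw [flat_iff' F hinj p hw _ _ hne, hys, Submodule.span_singleton_le_iff_mem,
        frame_flat p A hA1]
      simp
    rw [pt_le_iff, ← hz] at h3
    have ht := ((frame_flat (fun i => F (p i)) C hC1 Finset.univ z t).1 h3).1
    subst ht
    have e1 := congrArg Prod.fst hab
    simp only [Prod.fst_add, Prod.smul_fst, smul_zero, zero_add] at e1
    have e : (F y).rep = b • C (c • x, 0) := by
      rw [← hz, e1, ← map_smul]; simp
    have hb0 : b ≠ 0 := by
      rintro rfl
      exact (F y).rep_nonzero (by rw [e, zero_smul])
    rw [Projectivization.submodule_eq, e, Submodule.span_singleton_smul_eq hb0.isUnit]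
  · have e : Projectivization.mk ℝ (A (x, t)) hv = pt (t⁻¹ • x) := by
      apply Projectivization.submodule_injective
      rw [Projectivization.submodule_mk, hpt]
      have : A (t⁻¹ • x, 1) = t⁻¹ • A (x, t) := by rw [← map_smul]; simp [ht]
      rw [this, Submodule.span_singleton_smul_eq (inv_ne_zero ht).isUnit]
    rw [e, hφ, hφc]
    have : C (c • t⁻¹ • x, 1) = t⁻¹ • C (c • x, t) := by
      rw [← map_smul]; simp [ht, smul_comm c]
    rw [this, Submodule.span_singleton_smul_eq (inv_ne_zero ht).isUnit]
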